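/- Let (E,d_E) be a separable metric space, let p ≥ 1, let μ ∈ 𝒫_p(E), let n ∈ ℕ and let q ≥ p. Then (𝔼[W_p(μ_n,μ)^p])^{1/p} ≤ 10 · ∑_{k=0}^{⌊log₂ n⌋} a_k · e_{2^k,q}(μ), where a_k = C(p,q)·(2^k/n)^{1/(2p)} if q > 2p, a_k = (⌊log₂ n⌋ + 1)·(2^k/n)^{1/(2p)} if q = 2p, a_k = C(p,q)·(2^k/n)^{1/p − 1/q} if q < 2p, with C(p,q) = 2/|1/(2p) − 1/q|; here μ_n is the empirical measure of μ with sample size n. -/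

import Mathlib

open MeasureTheory ENNReal Filter

noncomputable section

/-- The `p`-Wasserstein distance between two measures on a metric space, as an
extended nonnegative real: the infimum over all couplings `γ` (measures on `E × E`
with the prescribed marginals) of `(∫ d(x,y)^p dγ)^(1/p)`. -/
def Wp {E : Type*} [MetricSpace E] [MeasurableSpace E] (p : ℝ) (μ ν : Measure E) : ℝ≥0∞ :=
  ⨅ γ ∈ {γ : Measure (E × E) | γ.map Prod.fst = μ ∧ γ.map Prod.snd = ν},
    (∫⁻ z, edist z.1 z.2 ^ p ∂γ) ^ (1 / p)

/-- The (uniform) discrete measure `(1/n) ∑ δ_{X i}`. -/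
def empiricalMeasure {E : Type*} [MeasurableSpace E] (n : ℕ) (X : Fin n → E) : Measure E :=
  (n : ℝ≥0∞)⁻¹ • ∑ i, Measure.dirac (X i)

/-- The law of `n` independent samples of `μ`. -/
def sampleMeasure {E : Type*} [MeasurableSpace E] (μ : Measure E) (n : ℕ) :
    Measure (Fin n → E) :=
  Measure.pi fun _ => μ

/-- `𝔼[W_p(μ_n, μ)]`, where `μ_n` is the empirical measure of `μ` with sample size `n`. -/
def expWp {E : Type*} [MetricSpace E] [MeasurableSpace E] (p : ℝ) (μ : Measure E) (n : ℕ) :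
    ℝ≥0∞ :=
  ∫⁻ X, Wp p (empiricalMeasure n X) μ ∂(sampleMeasure μ n)

/-- `(𝔼[W_p(μ_n, μ)^p])^{1/p}`, where `μ_n` is the empirical measure of `μ` with
sample size `n`. -/
def expWpPow {E : Type*} [MetricSpace E] [MeasurableSpace E] (p : ℝ) (μ : Measure E) (n : ℕ) :
    ℝ≥0∞ :=
  (∫⁻ X, (Wp p (empiricalMeasure n X) μ) ^ p ∂(sampleMeasure μ n)) ^ (1 / p)

/-- The optimal uniform quantization error
`b_{n,p}(μ) = inf_{x₁,…,x_n} W_p(μ, (1/n) ∑ δ_{x_i})`. -/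
def unifQuantErr {E : Type*} [MetricSpace E] [MeasurableSpace E] (p : ℝ) (n : ℕ)
    (μ : Measure E) : ℝ≥0∞ :=
  ⨅ x : Fin n → E, Wp p μ (empiricalMeasure n x)

/-- The optimal quantization error `e_{n,p}(μ)`: the infimum of `W_p(μ, ν)` over all
probability measures `ν` supported on at most `n` points. -/
def quantErr {E : Type*} [MetricSpace E] [MeasurableSpace E] (p : ℝ) (n : ℕ)
    (μ : Measure E) : ℝ≥0∞ :=
  ⨅ ν ∈ {ν : Measure E | IsProbabilityMeasure ν ∧
      ∃ S : Finset E, S.card ≤ n ∧ ν (↑S : Set E)ᶜ = 0}, Wp p μ ν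

/-- `μ` has a finite `p`-th moment: `∫ d(x, x₀)^p dμ(x) < ∞` for some `x₀`. -/
def HasFiniteMoment {E : Type*} [MetricSpace E] [MeasurableSpace E] (p : ℝ)
    (μ : Measure E) : Prop :=
  ∃ x₀ : E, ∫⁻ x, edist x x₀ ^ p ∂μ ≠ ∞

end

/-!
For each `k`, a nearly optimal quantizer with `2 ^ k` points partitions `E` into `2 ^ k` cells. Push
`μ` and `μ_n` to the points of the finest quantizer, `2 ^ K ≤ n < 2 ^ (K + 1)`, and couple them by
moving mass through coarser and coarser quantizers, from level `k + 1` to level `k` with the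
conditional probabilities of the cells under `μ`. At each level the mass that the two flows have in
common stays where it is, so only their difference is moved, and at level `0` there is a single cell
and nothing is left to move.

Running the same transitions from `μ_n` makes the mass received by a cell a mean of `n` independent
`[0, 1]`-valued variables whose expectation is the mass `ν` of the cell. The expected difference is
therefore at most `min ν ((ν / n) ^ (1 / 2))`, hence at most `ν ^ u * n ^ (u - 1)` for
`1 / 2 ≤ u ≤ 1`. With `u = p / r` and `r = min q (2 p)`, Hölder's inequality over the cells bounds
the expected cost of moving the difference from level `k + 1` to level `k` by
`2 * (2 ^ (k + 1) / n) ^ (1 / p - 1 / r)` times the sum of the `r`-th quantization errors of the two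
levels.
-/

open ProbabilityTheory
open scoped NNReal Matrix BigOperators

section Wasserstein

variable {E F : Type*} [MetricSpace E] [MeasurableSpace E] [MeasurableSpace F] {p : ℝ}

lemma Wp_le_eLpNorm'_edist {α β : Measure E} (γ : Measure (E × E)) (hα : γ.map Prod.fst = α)
    (hβ : γ.map Prod.snd = β) : Wp p α β ≤ eLpNorm' (fun z => edist z.1 z.2) p γ :=
  iInf₂_le (f := fun γ (_ : γ ∈ {γ : Measure (E × E) | γ.map Prod.fst = α ∧
    γ.map Prod.snd = β}) => eLpNorm' (fun z : E × E => edist z.1 z.2) p γ) γ ⟨hα, hβ⟩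

lemma le_Wp {α β : Measure E} {c : ℝ≥0∞}
    (h : ∀ γ : Measure (E × E), γ.map Prod.fst = α → γ.map Prod.snd = β →
      c ≤ eLpNorm' (fun z => edist z.1 z.2) p γ) : c ≤ Wp p α β :=
  le_iInf₂ fun γ hγ => h γ hγ.1 hγ.2

lemma eLpNorm'_map_measure {G : Type*} [MeasurableSpace G] {f : F → ℝ≥0∞} {T : G → F}
    (hf : Measurable f) (hT : Measurable T) (p : ℝ) (ρ : Measure G) :
    eLpNorm' f p (ρ.map T) = eLpNorm' (f ∘ T) p ρ := by
  simp only [eLpNorm', enorm_eq_self, Function.comp_apply]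
  rw [lintegral_map (hf.pow_const p) hT]

variable [SecondCountableTopology E] [OpensMeasurableSpace E]

lemma Wp_map_map_le {f g : F → E} (hf : Measurable f) (hg : Measurable g) (ρ : Measure F) :
    Wp p (ρ.map f) (ρ.map g) ≤ eLpNorm' (fun x => edist (f x) (g x)) p ρ := by
  have hfg : Measurable fun x => (f x, g x) := hf.prodMk hg
  refine (Wp_le_eLpNorm'_edist (ρ.map fun x => (f x, g x)) ?_ ?_).trans_eq
    (eLpNorm'_map_measure measurable_edist hfg p ρ)
  · exact Measure.map_map measurable_fst hfg
  · exact Measure.map_map measurable_snd hfg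

lemma Wp_map_right_le {T : E → E} (hT : Measurable T) (ρ : Measure E) :
    Wp p ρ (ρ.map T) ≤ eLpNorm' (fun x => edist x (T x)) p ρ := by
  simpa using Wp_map_map_le (p := p) measurable_id hT ρ

lemma Wp_self (hp : 0 < p) (ρ : Measure E) : Wp p ρ ρ = 0 := by
  simpa [eLpNorm', hp] using Wp_map_map_le (p := p) measurable_id measurable_id ρ

lemma Wp_comm (p : ℝ) (α β : Measure E) : Wp p α β = Wp p β α := by
  have swap_le (α β : Measure E) : Wp p α β ≤ Wp p β α := by
    refine le_Wp fun γ hβ hα => ?_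
    rw [← hα, ← hβ]
    simpa only [edist_comm] using Wp_map_map_le (p := p) measurable_snd measurable_fst γ
  exact le_antisymm (swap_le α β) (swap_le β α)

lemma Wp_add_right_le (hp : 0 < p) (α β ρ : Measure E) :
    Wp p (α + ρ) (β + ρ) ≤ Wp p α β := by
  have hdiag : Measurable fun x : E => (x, x) := measurable_id.prodMk measurable_id
  refine le_Wp fun γ hα hβ => ?_
  refine (Wp_le_eLpNorm'_edist (γ + ρ.map fun x => (x, x)) ?_ ?_).trans_eq ?_
  · rw [Measure.map_add _ _ measurable_fst, hα, Measure.map_map measurable_fst hdiag]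
    exact congrArg (α + ·) Measure.map_id
  · rw [Measure.map_add _ _ measurable_snd, hβ, Measure.map_map measurable_snd hdiag]
    exact congrArg (β + ·) Measure.map_id
  · simp only [eLpNorm', enorm_eq_self]
    rw [lintegral_add_measure, lintegral_map (measurable_edist.pow_const p) hdiag]
    simp [hp]

end Wasserstein

section Gluing

variable {E F G : Type*} [MeasurableSpace E] [MeasurableSpace F] [MeasurableSpace G]

lemma map_fst_inv_smul_prod {ρ : Measure F} {σ : Measure G} [IsFiniteMeasure ρ] [SFinite σ]
    (h : ρ Set.univ = σ Set.univ) : ((σ Set.univ)⁻¹ • ρ.prod σ).map Prod.fst = ρ := by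
  rw [Measure.map_smul, Measure.map_fst_prod, smul_smul, ← h]
  rcases eq_or_ne ρ 0 with rfl | hρ
  · simp
  · rw [ENNReal.inv_mul_cancel (by simpa using hρ) (measure_ne_top _ _), one_smul]

lemma map_snd_inv_smul_prod {ρ : Measure F} {σ : Measure G} [IsFiniteMeasure σ]
    (h : ρ Set.univ = σ Set.univ) : ((σ Set.univ)⁻¹ • ρ.prod σ).map Prod.snd = σ := by
  rw [Measure.map_smul, Measure.map_snd_prod, smul_smul, h]
  rcases eq_or_ne σ 0 with rfl | hσ
  · simp
  · rw [ENNReal.inv_mul_cancel (by simpa using hσ) (measure_ne_top _ _), one_smul]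

variable [MeasurableSingletonClass E]

lemma sum_restrict_preimage_singleton {γ : Measure F} {f : F → E} (hf : Measurable f) {S : Set E}
    (hS : S.Countable) (hγ : γ (f ⁻¹' Sᶜ) = 0) :
    Measure.sum (fun z : S => γ.restrict (f ⁻¹' {z.1})) = γ := by
  have := hS.to_subtype
  have hdisj : Pairwise (Function.onFun Disjoint fun z : S => f ⁻¹' {z.1}) := fun z w hzw =>
    (Set.disjoint_singleton.2 (Subtype.coe_ne_coe.2 hzw)).preimage f
  rw [← Measure.restrict_iUnion hdisj fun z => hf (measurableSet_singleton z.1)]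
  refine Measure.restrict_eq_self_of_ae_mem ?_
  rw [ae_iff]
  convert hγ using 2
  ext x
  simp

/- Over each atom `z` of the common marginal, the two restrictions are coupled independently. -/
lemma exists_gluing_of_map_eq {γ₁ : Measure F} {γ₂ : Measure G} [IsFiniteMeasure γ₁]
    [IsFiniteMeasure γ₂] {f : F → E} {g : G → E} (hf : Measurable f) (hg : Measurable g)
    (hfg : γ₁.map f = γ₂.map g) {S : Set E} (hS : S.Countable) (hnull : γ₁.map f Sᶜ = 0) :
    ∃ η : Measure (F × G), η.map Prod.fst = γ₁ ∧ η.map Prod.snd = γ₂ ∧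
      ∀ᵐ w ∂η, f w.1 = g w.2 := by
  have := hS.to_subtype
  let ρ (z : S) : Measure F := γ₁.restrict (f ⁻¹' {z.1})
  let σ (z : S) : Measure G := γ₂.restrict (g ⁻¹' {z.1})
  have hmass (z : S) : ρ z Set.univ = σ z Set.univ := by
    have hz := measurableSet_singleton z.1
    simp only [ρ, σ, Measure.restrict_apply_univ]
    rw [← Measure.map_apply hf hz, ← Measure.map_apply hg hz, hfg]
  have hnull₂ : γ₂ (g ⁻¹' Sᶜ) = 0 := by
    rw [← Measure.map_apply hg hS.measurableSet.compl, ← hfg, hnull]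
  have hnull₁ : γ₁ (f ⁻¹' Sᶜ) = 0 := by
    rw [← Measure.map_apply hf hS.measurableSet.compl, hnull]
  refine ⟨Measure.sum fun z => (σ z Set.univ)⁻¹ • (ρ z).prod (σ z), ?_, ?_, ?_⟩
  · rw [Measure.map_sum measurable_fst.aemeasurable,
      ← sum_restrict_preimage_singleton hf hS hnull₁]
    exact congrArg Measure.sum (funext fun z => map_fst_inv_smul_prod (hmass z))
  · rw [Measure.map_sum measurable_snd.aemeasurable,
      ← sum_restrict_preimage_singleton hg hS hnull₂]
    exact congrArg Measure.sum (funext fun z => map_snd_inv_smul_prod (hmass z))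
  · refine Measure.ae_sum_iff.2 fun z => Measure.ae_smul_measure ?_ _
    simp only [ρ, σ, Measure.prod_restrict]
    have hz := measurableSet_singleton z.1
    filter_upwards [ae_restrict_mem ((hf hz).prod (hg hz))] with w hw
    exact (Set.mem_singleton_iff.1 hw.1).trans (Set.mem_singleton_iff.1 hw.2).symm

end Gluing

lemma Wp_triangle_of_countable {E : Type*} [MetricSpace E] [MeasurableSpace E]
    [SecondCountableTopology E] [OpensMeasurableSpace E] {p : ℝ} (hp : 1 ≤ p)
    (α β ρ : Measure E) [IsFiniteMeasure β] {S : Set E} (hS : S.Countable) (hβ : β Sᶜ = 0) :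
    Wp p α ρ ≤ Wp p α β + Wp p β ρ := by
  conv_rhs => unfold Wp
  simp only [ENNReal.iInf_add, ENNReal.add_iInf]
  refine le_iInf₂ fun γ₂ ⟨hβ₂, hρ⟩ => le_iInf₂ fun γ₁ ⟨hα, hβ₁⟩ => ?_
  have : IsFiniteMeasure (γ₁.map Prod.snd) := by rwa [hβ₁]
  have : IsFiniteMeasure (γ₂.map Prod.fst) := by rwa [hβ₂]
  have := Measure.isFiniteMeasure_of_map (μ := γ₁) measurable_snd.aemeasurable
  have := Measure.isFiniteMeasure_of_map (μ := γ₂) measurable_fst.aemeasurable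
  obtain ⟨η, rfl, rfl, hη⟩ := exists_gluing_of_map_eq measurable_snd measurable_fst
    (hβ₁.trans hβ₂.symm) hS (hβ₁ ▸ hβ)
  rw [Measure.map_map measurable_fst measurable_fst] at hα
  rw [Measure.map_map measurable_snd measurable_snd] at hρ
  calc Wp p α ρ ≤ eLpNorm' (fun w : (E × E) × E × E => edist w.1.1 w.2.2) p η := by
        rw [← hα, ← hρ]
        exact Wp_map_map_le (measurable_fst.comp measurable_fst)
          (measurable_snd.comp measurable_snd) η
    _ ≤ eLpNorm' ((fun w => edist w.1.1 w.1.2) + fun w => edist w.2.1 w.2.2) p η := by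
        refine eLpNorm'_mono_enorm_ae (by positivity) ?_
        filter_upwards [hη] with w hw
        simpa only [enorm_eq_self, Pi.add_apply, ← hw] using edist_triangle w.1.1 w.1.2 w.2.2
    _ ≤ eLpNorm' (fun w => edist w.1.1 w.1.2) p η + eLpNorm' (fun w => edist w.2.1 w.2.2) p η :=
        eLpNorm'_add_le (by fun_prop) (by fun_prop) hp
    _ = eLpNorm' (fun z => edist z.1 z.2) p (η.map Prod.fst) +
          eLpNorm' (fun z => edist z.1 z.2) p (η.map Prod.snd) := by
        rw [eLpNorm'_map_measure measurable_edist measurable_fst,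
          eLpNorm'_map_measure measurable_edist measurable_snd]
        rfl

section DiscreteMeasure

variable {ι κ E F : Type*} [Fintype ι] [Fintype κ] [MeasurableSpace E] [MeasurableSpace F]

/-- The measure `∑ i, a i • δ_{s i}` carried by finitely many points `s i` with weights `a i`. The
weights need not sum to one: differences of probability vectors are used as well. -/
noncomputable def discreteMeasure (s : ι → E) (a : ι → ℝ≥0) : Measure E :=
  ∑ i, a i • Measure.dirac (s i)

instance (s : ι → E) (a : ι → ℝ≥0) : IsFiniteMeasure (discreteMeasure s a) := by
  unfold discreteMeasure
  infer_instance

lemma discreteMeasure_add (s : ι → E) (a b : ι → ℝ≥0) :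
    discreteMeasure s (a + b) = discreteMeasure s a + discreteMeasure s b := by
  simp only [discreteMeasure, Pi.add_apply, add_smul, Finset.sum_add_distrib]

lemma discreteMeasure_compl_range [MeasurableSingletonClass E] (s : ι → E) (a : ι → ℝ≥0) :
    discreteMeasure s a (Set.range s)ᶜ = 0 := by
  simp [discreteMeasure, Set.finite_range s |>.measurableSet.compl]

lemma lintegral_discreteMeasure {f : E → ℝ≥0∞} (hf : Measurable f) (s : ι → E) (a : ι → ℝ≥0) :
    ∫⁻ x, f x ∂discreteMeasure s a = ∑ i, a i * f (s i) := by
  simp only [discreteMeasure, lintegral_finsetSum_measure, lintegral_smul_measure,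
    lintegral_dirac' _ hf, ENNReal.smul_def, smul_eq_mul]

lemma map_discreteMeasure {f : E → F} (hf : Measurable f) (s : ι → E) (a : ι → ℝ≥0) :
    (discreteMeasure s a).map f = discreteMeasure (f ∘ s) a := by
  simp only [discreteMeasure, Measure.map_finset_sum hf.aemeasurable, Measure.map_smul,
    Measure.map_dirac' hf, Function.comp_apply]

lemma discreteMeasure_comp_fst (s : ι → E) (w : ι × κ → ℝ≥0) :
    discreteMeasure (s ∘ Prod.fst) w = discreteMeasure s fun i => ∑ j, w (i, j) := by
  simp only [discreteMeasure, Fintype.sum_prod_type, Function.comp_apply, Finset.sum_smul]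

lemma discreteMeasure_comp_snd (t : κ → E) (w : ι × κ → ℝ≥0) :
    discreteMeasure (t ∘ Prod.snd) w = discreteMeasure t fun j => ∑ i, w (i, j) := by
  simp only [discreteMeasure, Fintype.sum_prod_type_right, Function.comp_apply, Finset.sum_smul]

end DiscreteMeasure

lemma vecMul_tsub_sub_vecMul_tsub {ι κ : Type*} [Fintype ι] (a b : ι → ℝ≥0)
    (P : Matrix ι κ ℝ≥0) : (a - b) ᵥ* P - (b - a) ᵥ* P = a ᵥ* P - b ᵥ* P := by
  have hab : (a - b) + b = (b - a) + a := by
    ext i; simp only [Pi.add_apply, Pi.sub_apply, tsub_add_eq_max, max_comm]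
  have h (j : κ) : ((a - b) ᵥ* P) j + (b ᵥ* P) j = ((b - a) ᵥ* P) j + (a ᵥ* P) j := by
    simpa only [Matrix.add_vecMul, Pi.add_apply] using congrFun (congrArg (· ᵥ* P) hab) j
  funext j
  simp only [Pi.sub_apply]
  rw [← add_tsub_add_eq_tsub_right _ ((b ᵥ* P) j), h, add_tsub_add_eq_tsub_left]

section TransportCost

variable {E : Type*} [MetricSpace E] {p : ℝ}

/-- The cost `(∑ i, a i * ∑ j, P i j * d(s i, t j)^p)^(1/p)` of moving the masses `a i` from the
points `s i` to the points `t j` in the proportions given by the stochastic matrix `P`. -/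
noncomputable def transportCost {ι κ : Type*} [Fintype ι] [Fintype κ] (p : ℝ) (s : ι → E)
    (t : κ → E) (P : Matrix ι κ ℝ≥0) (a : ι → ℝ≥0) : ℝ≥0∞ :=
  (∑ i, a i * ∑ j, P i j * edist (s i) (t j) ^ p) ^ (1 / p)

variable [MeasurableSpace E] [SecondCountableTopology E] [OpensMeasurableSpace E]

lemma Wp_vecMul_le_transportCost {ι κ : Type*} [Fintype ι] [Fintype κ] (s : ι → E) (t : κ → E)
    {P : Matrix ι κ ℝ≥0} (hP : P *ᵥ 1 = 1) (a : ι → ℝ≥0) :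
    Wp p (discreteMeasure s a) (discreteMeasure t (a ᵥ* P)) ≤ transportCost p s t P a := by
  let w : ι × κ → ℝ≥0 := fun ij => a ij.1 * P ij.1 ij.2
  let γ : Measure (E × E) := discreteMeasure (Prod.map s t) w
  have hrow (i : ι) : ∑ j, P i j = 1 := by
    simpa only [Matrix.mulVec, dotProduct, Pi.one_apply, mul_one] using congrFun hP i
  refine (Wp_le_eLpNorm'_edist γ ?_ ?_).trans_eq ?_
  · rw [map_discreteMeasure measurable_fst]
    refine (discreteMeasure_comp_fst s w).trans ?_
    simp only [w, ← Finset.mul_sum, hrow, mul_one]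
  · rw [map_discreteMeasure measurable_snd]
    exact discreteMeasure_comp_snd t w
  · simp only [eLpNorm', enorm_eq_self, γ]
    rw [lintegral_discreteMeasure (measurable_edist.pow_const p)]
    simp [transportCost, w, Fintype.sum_prod_type, Finset.mul_sum, mul_assoc]

lemma Wp_discreteMeasure_le_tsub {ι : Type*} [Fintype ι] (hp : 0 < p) (s : ι → E)
    (a b : ι → ℝ≥0) :
    Wp p (discreteMeasure s a) (discreteMeasure s b) ≤
      Wp p (discreteMeasure s (a - b)) (discreteMeasure s (b - a)) := by
  have split (a b : ι → ℝ≥0) :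
      discreteMeasure s a = discreteMeasure s (a - b) + discreteMeasure s (a ⊓ b) := by
    rw [← discreteMeasure_add]
    congr 1
    ext i
    simp only [Pi.add_apply, Pi.sub_apply, Pi.inf_apply, tsub_add_min]
  rw [split a b, split b a, inf_comm b a]
  exact Wp_add_right_le hp _ _ _

lemma Wp_triangle_discreteMeasure {ι : Type*} [Fintype ι] (hp : 1 ≤ p) (s : ι → E)
    (a : ι → ℝ≥0) (α β : Measure E) :
    Wp p α β ≤ Wp p α (discreteMeasure s a) + Wp p (discreteMeasure s a) β :=
  Wp_triangle_of_countable hp α _ β (Set.countable_range s) (discreteMeasure_compl_range s a)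

/- Mass which `a` and `b` have in common is left where it is, so only the differences pay. -/
lemma Wp_tsub_le_transportCost_add {ι κ : Type*} [Fintype ι] [Fintype κ] (hp : 1 ≤ p) (s : ι → E)
    (t : κ → E) {P : Matrix ι κ ℝ≥0} (hP : P *ᵥ 1 = 1) (a b : ι → ℝ≥0) :
    Wp p (discreteMeasure s (a - b)) (discreteMeasure s (b - a)) ≤
      (transportCost p s t P (a - b) + transportCost p s t P (b - a)) +
        Wp p (discreteMeasure t (a ᵥ* P - b ᵥ* P)) (discreteMeasure t (b ᵥ* P - a ᵥ* P)) := by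
  set a' := (a - b) ᵥ* P with ha'
  set b' := (b - a) ᵥ* P with hb'
  calc Wp p (discreteMeasure s (a - b)) (discreteMeasure s (b - a))
      ≤ Wp p (discreteMeasure s (a - b)) (discreteMeasure t a') +
          (Wp p (discreteMeasure t a') (discreteMeasure t b') +
            Wp p (discreteMeasure t b') (discreteMeasure s (b - a))) :=
        (Wp_triangle_discreteMeasure hp t a' _ _).trans
          (add_le_add_right (Wp_triangle_discreteMeasure hp t b' _ _) _)
    _ ≤ transportCost p s t P (a - b) +
          (Wp p (discreteMeasure t (a' - b')) (discreteMeasure t (b' - a')) +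
            transportCost p s t P (b - a)) := by
        rw [Wp_comm p (discreteMeasure t b') (discreteMeasure s (b - a))]
        gcongr
        · exact Wp_vecMul_le_transportCost s t hP _
        · exact Wp_discreteMeasure_le_tsub (by linarith) t a' b'
        · exact Wp_vecMul_le_transportCost s t hP _
    _ = _ := by
        rw [ha', hb', vecMul_tsub_sub_vecMul_tsub, vecMul_tsub_sub_vecMul_tsub]
        abel

variable {ι : ℕ → Type*} [∀ m, Fintype (ι m)]

lemma Wp_le_sum_transportCost (hp : 1 ≤ p) (s : ∀ m, ι m → E)
    {P : ∀ m, Matrix (ι m) (ι (m + 1)) ℝ≥0} (hP : ∀ m, P m *ᵥ 1 = 1) {A B : ∀ m, ι m → ℝ≥0}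
    (hA : ∀ m, A (m + 1) = A m ᵥ* P m) (hB : ∀ m, B (m + 1) = B m ᵥ* P m) {K : ℕ}
    (hAB : A K = B K) :
    Wp p (discreteMeasure (s 0) (A 0)) (discreteMeasure (s 0) (B 0)) ≤
      ∑ m ∈ Finset.range K, (transportCost p (s m) (s (m + 1)) (P m) (A m - B m) +
        transportCost p (s m) (s (m + 1)) (P m) (B m - A m)) := by
  have hp0 : 0 < p := by linarith
  set cost : ℕ → ℝ≥0∞ := fun m => transportCost p (s m) (s (m + 1)) (P m) (A m - B m) +
    transportCost p (s m) (s (m + 1)) (P m) (B m - A m)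
  have stop_at (m : ℕ) : Wp p (discreteMeasure (s 0) (A 0)) (discreteMeasure (s 0) (B 0)) ≤
      ∑ k ∈ Finset.range m, cost k +
        Wp p (discreteMeasure (s m) (A m - B m)) (discreteMeasure (s m) (B m - A m)) := by
    induction m with
    | zero => simpa using Wp_discreteMeasure_le_tsub hp0 (s 0) (A 0) (B 0)
    | succ m ih =>
      rw [Finset.sum_range_succ, add_assoc, hA m, hB m]
      exact ih.trans (by gcongr; exact Wp_tsub_le_transportCost_add hp _ _ (hP m) _ _)
  simpa [hAB, Wp_self hp0] using stop_at K

end TransportCost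

section SampleMean

variable {F : Type*} [MeasurableSpace F] {μ : Measure F} [IsProbabilityMeasure μ] {n : ℕ}

instance : IsProbabilityMeasure (sampleMeasure μ n) := by
  unfold sampleMeasure
  infer_instance

lemma measurePreserving_sampleMeasure_eval (l : Fin n) :
    MeasurePreserving (fun X : Fin n → F => X l) (sampleMeasure μ n) μ :=
  measurePreserving_eval (fun _ => μ) l

lemma lintegral_empiricalMeasure {f : F → ℝ≥0∞} (hf : Measurable f) (X : Fin n → F) :
    ∫⁻ x, f x ∂empiricalMeasure n X = (n : ℝ≥0∞)⁻¹ * ∑ l, f (X l) := by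
  simp only [empiricalMeasure, lintegral_smul_measure, lintegral_finsetSum_measure,
    lintegral_dirac' _ hf, smul_eq_mul]

lemma lintegral_sampleMeasure_lintegral_empiricalMeasure (hn : n ≠ 0) {f : F → ℝ≥0∞}
    (hf : Measurable f) :
    ∫⁻ X, ∫⁻ x, f x ∂empiricalMeasure n X ∂sampleMeasure μ n = ∫⁻ x, f x ∂μ := by
  simp only [lintegral_empiricalMeasure hf]
  rw [lintegral_const_mul _ (by fun_prop), lintegral_finsetSum _ (by fun_prop)]
  simp only [(measurePreserving_sampleMeasure_eval _).lintegral_comp hf]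
  rw [Finset.sum_const, Finset.card_univ, Fintype.card_fin, nsmul_eq_mul,
    ENNReal.inv_mul_cancel_left (by simpa) (by simp)]

lemma coe_expect_eq_lintegral_empiricalMeasure (hn : n ≠ 0) {h : F → ℝ≥0} (hh : Measurable h)
    (X : Fin n → F) :
    ((𝔼 l, h (X l) : ℝ≥0) : ℝ≥0∞) = ∫⁻ x, h x ∂empiricalMeasure n X := by
  rw [lintegral_empiricalMeasure hh.coe_nnreal_ennreal, Fintype.expect_eq_sum_div_card,
    Fintype.card_fin, ENNReal.coe_div (by exact_mod_cast hn), ENNReal.coe_natCast,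
    ENNReal.div_eq_inv_mul, ENNReal.ofNNReal_finsetSum]

lemma measurable_expect {h : F → ℝ≥0} (hh : Measurable h) :
    Measurable fun X : Fin n → F => 𝔼 l, h (X l) := by
  simp only [Fintype.expect_eq_sum_div_card]
  fun_prop

lemma lintegral_enorm_sub_integral_le (Y : F → ℝ) (hY : AEStronglyMeasurable Y μ) :
    ∫⁻ x, ‖Y x - μ[Y]‖ₑ ∂μ ≤ evariance Y μ ^ (1 / 2 : ℝ) := by
  simpa [eLpNorm', evariance] using eLpNorm'_le_eLpNorm'_of_exponent_le (p := 1) (q := 2)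
    one_pos one_le_two μ (hY.sub aestronglyMeasurable_const)

lemma integral_expect (hn : n ≠ 0) {f : F → ℝ} (hf : Integrable f μ) :
    ∫ X, 𝔼 l, f (X l) ∂sampleMeasure μ n = μ[f] := by
  have heval (l : Fin n) := measurePreserving_sampleMeasure_eval (μ := μ) l
  have hcomp (l : Fin n) : Integrable (fun X => f (X l)) (sampleMeasure μ n) :=
    (heval l).integrable_comp_of_integrable hf
  have hint (l : Fin n) : ∫ X, f (X l) ∂sampleMeasure μ n = μ[f] := by
    have hmeas := (heval l).map_eq.symm ▸ hf.aestronglyMeasurable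
    rw [← integral_map (heval l).aemeasurable hmeas, (heval l).map_eq]
  simp only [Fintype.expect_eq_sum_div_card, integral_div]
  rw [integral_finsetSum _ fun l _ => hcomp l]
  simp [hint, hn]

lemma variance_expect {f : F → ℝ} (hf : MemLp f 2 μ) :
    Var[fun X => 𝔼 l, f (X l); sampleMeasure μ n] = Var[f; μ] / n := by
  have h : (fun X : Fin n → F => 𝔼 l, f (X l)) =
      fun X => (n : ℝ)⁻¹ * (∑ l, fun X : Fin n → F => f (X l)) X := by
    ext X
    rw [Fintype.expect_eq_sum_div_card, Fintype.card_fin, div_eq_inv_mul, Finset.sum_apply]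
  rw [h, variance_const_mul, sampleMeasure, variance_sum_pi fun _ => hf, Finset.sum_const,
    Finset.card_univ, Fintype.card_fin, nsmul_eq_mul]
  field_simp

lemma memLp_expect {f : F → ℝ} (hf : MemLp f 2 μ) :
    MemLp (fun X => 𝔼 l, f (X l)) 2 (sampleMeasure μ n) := by
  simp only [Fintype.expect_eq_sum_div_card, div_eq_inv_mul]
  exact (memLp_finsetSum _ fun l _ =>
    hf.comp_measurePreserving (measurePreserving_sampleMeasure_eval l)).const_mul _

lemma lintegral_enorm_expect_sub_integral_le (hn : n ≠ 0) {f : F → ℝ} (hf : MemLp f 2 μ) :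
    ∫⁻ X, ‖𝔼 l, f (X l) - μ[f]‖ₑ ∂sampleMeasure μ n ≤
      ENNReal.ofReal (Var[f; μ] / n) ^ (1 / 2 : ℝ) := by
  have hA := memLp_expect (n := n) hf
  have h := lintegral_enorm_sub_integral_le _ hA.aestronglyMeasurable
  rwa [integral_expect hn (hf.integrable one_le_two), ← ofReal_variance hA,
    variance_expect hf] at h

lemma lintegral_enorm_expect_sub_le_sqrt (hn : n ≠ 0) {h : F → ℝ≥0} (hh : Measurable h)
    (h1 : ∀ x, h x ≤ 1) {ν : ℝ≥0} (hν : ∫⁻ x, h x ∂μ = ν) :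
    ∫⁻ X, ‖((𝔼 l, h (X l) : ℝ≥0) : ℝ) - ν‖ₑ ∂sampleMeasure μ n ≤
      (ν * (n : ℝ≥0∞)⁻¹) ^ (1 / 2 : ℝ) := by
  have hmem : ∀ᵐ x ∂μ, (h x : ℝ) ∈ Set.Icc 0 1 := ae_of_all _ fun x => ⟨(h x).2, h1 x⟩
  have hmeas : AEStronglyMeasurable (fun x => (h x : ℝ)) μ :=
    hh.coe_nnreal_real.aestronglyMeasurable
  have hmean : ∫ x, (h x : ℝ) ∂μ = ν := by
    rw [integral_eq_lintegral_of_nonneg_ae (ae_of_all _ fun x => NNReal.coe_nonneg (h x)) hmeas]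
    simp only [ENNReal.ofReal_coe_nnreal, hν, ENNReal.coe_toReal]
  have hL2 := memLp_of_bounded hmem hmeas 2
  have hvar : Var[fun x => (h x : ℝ); μ] ≤ ν := by
    have := variance_le_sub_mul_sub hmem hmeas.aemeasurable
    rw [hmean] at this
    nlinarith [ν.2]
  have hdev := lintegral_enorm_expect_sub_integral_le hn hL2
  simp only [hmean, ← NNReal.coe_expect] at hdev
  refine hdev.trans (ENNReal.rpow_le_rpow ?_ (by norm_num))
  calc ENNReal.ofReal (Var[fun x => (h x : ℝ); μ] / n) ≤ ENNReal.ofReal (ν / n) := by gcongr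
    _ = ν * (n : ℝ≥0∞)⁻¹ := by
      rw [ENNReal.ofReal_div_of_pos (by positivity), ENNReal.ofReal_coe_nnreal,
        ENNReal.ofReal_natCast, div_eq_mul_inv]

lemma le_rpow_mul_rpow_of_le_of_le_sqrt {w ν m : ℝ≥0∞} {u : ℝ} (hwν : w ≤ ν)
    (hw : w ≤ (ν * m) ^ (1 / 2 : ℝ)) (hu : 1 / 2 ≤ u) (hu1 : u ≤ 1) :
    w ≤ m ^ (1 - u) * ν ^ u := by
  calc w = w ^ (2 * u - 1) * w ^ (2 * (1 - u)) := by
        rw [← ENNReal.rpow_add_of_nonneg _ _ (by linarith) (by linarith)]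
        ring_nf
        simp
    _ ≤ ν ^ (2 * u - 1) * ((ν * m) ^ (1 / 2 : ℝ)) ^ (2 * (1 - u)) := by
        gcongr
        linarith
    _ = m ^ (1 - u) * (ν ^ (2 * u - 1) * ν ^ (1 - u)) := by
        rw [← ENNReal.rpow_mul, show 1 / 2 * (2 * (1 - u)) = 1 - u by ring,
          ENNReal.mul_rpow_of_nonneg _ _ (by linarith)]
        ring
    _ = m ^ (1 - u) * ν ^ u := by
        rw [← ENNReal.rpow_add_of_nonneg _ _ (by linarith) (by linarith)]
        ring_nf

lemma coe_tsub_le_enorm_sub (a b : ℝ≥0) : ((a - b : ℝ≥0) : ℝ≥0∞) ≤ ‖(a : ℝ) - b‖ₑ := by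
  rw [← ofReal_norm, ← ENNReal.ofReal_coe_nnreal, NNReal.coe_sub_def]
  exact ENNReal.ofReal_le_ofReal (max_le (le_abs_self _) (norm_nonneg _))

variable {h : F → ℝ≥0} {ν : ℝ≥0} {u : ℝ}

lemma lintegral_expect_tsub_le (hn : n ≠ 0) (hh : Measurable h) (h1 : ∀ x, h x ≤ 1)
    (hν : ∫⁻ x, h x ∂μ = ν) (hu : 1 / 2 ≤ u) (hu1 : u ≤ 1) :
    ∫⁻ X, ((𝔼 l, h (X l) - ν : ℝ≥0) : ℝ≥0∞) ∂sampleMeasure μ n ≤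
      (n : ℝ≥0∞)⁻¹ ^ (1 - u) * (ν : ℝ≥0∞) ^ u := by
  refine le_rpow_mul_rpow_of_le_of_le_sqrt ?_ ?_ hu hu1
  · calc _ ≤ ∫⁻ X, ((𝔼 l, h (X l) : ℝ≥0) : ℝ≥0∞) ∂sampleMeasure μ n :=
          lintegral_mono fun X => ENNReal.coe_le_coe.2 tsub_le_self
      _ = ν := by
          simp only [coe_expect_eq_lintegral_empiricalMeasure hn hh]
          rw [lintegral_sampleMeasure_lintegral_empiricalMeasure hn hh.coe_nnreal_ennreal, hν]
  · exact (lintegral_mono fun X => coe_tsub_le_enorm_sub _ _).trans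
      (lintegral_enorm_expect_sub_le_sqrt hn hh h1 hν)

lemma lintegral_tsub_expect_le (hn : n ≠ 0) (hh : Measurable h) (h1 : ∀ x, h x ≤ 1)
    (hν : ∫⁻ x, h x ∂μ = ν) (hu : 1 / 2 ≤ u) (hu1 : u ≤ 1) :
    ∫⁻ X, ((ν - 𝔼 l, h (X l) : ℝ≥0) : ℝ≥0∞) ∂sampleMeasure μ n ≤
      (n : ℝ≥0∞)⁻¹ ^ (1 - u) * (ν : ℝ≥0∞) ^ u := by
  refine le_rpow_mul_rpow_of_le_of_le_sqrt ?_ ?_ hu hu1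
  · calc _ ≤ ∫⁻ _, (ν : ℝ≥0∞) ∂sampleMeasure μ n :=
          lintegral_mono fun X => ENNReal.coe_le_coe.2 tsub_le_self
      _ = ν := by simp
  · refine le_trans (lintegral_mono fun X => ?_) (lintegral_enorm_expect_sub_le_sqrt hn hh h1 hν)
    rw [enorm_sub_rev]
    exact coe_tsub_le_enorm_sub _ _

end SampleMean

section Cells

variable {F ι κ : Type*} [MeasurableSpace F]

/-- The mass `μ(π = i)` of the cell with label `i` of the partition of the space into the level
sets of `π`. -/
noncomputable def cellMass (μ : Measure F) (π : F → ι) (i : ι) : ℝ≥0 :=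
  (μ (π ⁻¹' {i})).toNNReal

variable [Fintype ι] [MeasurableSpace ι] [MeasurableSingletonClass ι] {π : F → ι}

lemma lintegral_comp_eq_sum_cellMass (μ : Measure F) [IsFiniteMeasure μ] (hπ : Measurable π)
    (f : ι → ℝ≥0∞) : ∫⁻ x, f (π x) ∂μ = ∑ i, cellMass μ π i * f i := by
  rw [← lintegral_map (measurable_of_finite f) hπ, lintegral_fintype]
  refine Finset.sum_congr rfl fun i _ => ?_
  rw [Measure.map_apply hπ (measurableSet_singleton i), mul_comm, cellMass,
    ENNReal.coe_toNNReal (measure_ne_top _ _)]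

lemma sum_cellMass (μ : Measure F) [IsProbabilityMeasure μ] (hπ : Measurable π) :
    ∑ i, cellMass μ π i = 1 := by
  have h := lintegral_comp_eq_sum_cellMass μ hπ 1
  simp only [Pi.one_apply, lintegral_one, measure_univ, mul_one] at h
  exact_mod_cast h.symm

lemma map_comp_eq_discreteMeasure {E : Type*} [MeasurableSpace E] (μ : Measure F)
    [IsFiniteMeasure μ] (hπ : Measurable π) (s : ι → E) :
    μ.map (s ∘ π) = discreteMeasure s (cellMass μ π) := by
  refine Measure.ext_of_lintegral _ fun f hf => ?_
  rw [lintegral_map hf ((measurable_of_finite s).comp hπ), lintegral_discreteMeasure hf]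
  exact lintegral_comp_eq_sum_cellMass μ hπ (f ∘ s)

lemma coe_vecMul_cellMass (μ : Measure F) [IsFiniteMeasure μ] (hπ : Measurable π)
    (Q : Matrix ι κ ℝ≥0) (j : κ) :
    ((cellMass μ π ᵥ* Q) j : ℝ≥0∞) = ∫⁻ x, Q (π x) j ∂μ := by
  rw [lintegral_comp_eq_sum_cellMass μ hπ fun i => (Q i j : ℝ≥0∞)]
  simp [Matrix.vecMul, dotProduct]

lemma sum_vecMul_cellMass [Fintype κ] (μ : Measure F) [IsProbabilityMeasure μ] (hπ : Measurable π)
    {Q : Matrix ι κ ℝ≥0} (hQ : Q *ᵥ 1 = 1) : ∑ j, (cellMass μ π ᵥ* Q) j = 1 := by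
  rw [← dotProduct_one, ← Matrix.dotProduct_mulVec, hQ, dotProduct_one, sum_cellMass μ hπ]

end Cells

section TransitionMatrix

variable {F ι κ : Type*} [MeasurableSpace F] [MeasurableSpace ι] [Fintype κ] [MeasurableSpace κ]
  [MeasurableSingletonClass κ] [Nonempty κ]

/-- The matrix of conditional probabilities `μ(π' = j | π = i)`. Where `π = i` has probability zero
the row is still a probability vector. -/
noncomputable def transitionMatrix (μ : Measure F) [IsFiniteMeasure μ] (π : F → ι) (π' : F → κ) :
    Matrix ι κ ℝ≥0 :=
  Matrix.of fun i => cellMass (condDistrib π' π μ i) id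

lemma transitionMatrix_mulVec_one (μ : Measure F) [IsFiniteMeasure μ] (π : F → ι) (π' : F → κ) :
    transitionMatrix μ π π' *ᵥ 1 = 1 := by
  ext i
  simp [Matrix.mulVec, dotProduct, transitionMatrix, sum_cellMass, measurable_id]

variable [Fintype ι] [MeasurableSingletonClass ι] {π : F → ι} {π' : F → κ}

lemma lintegral_comp_comp_eq_sum_transitionMatrix (μ : Measure F) [IsFiniteMeasure μ]
    (hπ : Measurable π) (hπ' : Measurable π') (f : ι → κ → ℝ≥0∞) :
    ∫⁻ x, f (π x) (π' x) ∂μ = ∑ i, cellMass μ π i * ∑ j, transitionMatrix μ π π' i j * f i j := by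
  have hf : Measurable (Function.uncurry f) := measurable_of_finite _
  calc ∫⁻ x, f (π x) (π' x) ∂μ = ∫⁻ z, Function.uncurry f z ∂μ.map fun x => (π x, π' x) := by
        rw [lintegral_map hf (hπ.prodMk hπ')]
        rfl
    _ = ∫⁻ i, ∫⁻ j, f i j ∂condDistrib π' π μ i ∂μ.map π := by
        rw [← compProd_map_condDistrib hπ'.aemeasurable, Measure.lintegral_compProd hf]
        rfl
    _ = ∫⁻ x, ∑ j, transitionMatrix μ π π' (π x) j * f (π x) j ∂μ := by
        rw [lintegral_map (measurable_of_finite _) hπ]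
        exact lintegral_congr fun x => lintegral_comp_eq_sum_cellMass _ measurable_id (f (π x))
    _ = _ := lintegral_comp_eq_sum_cellMass μ hπ fun i =>
        ∑ j, transitionMatrix μ π π' i j * f i j

lemma cellMass_vecMul_transitionMatrix (μ : Measure F) [IsFiniteMeasure μ] (hπ : Measurable π)
    (hπ' : Measurable π') : cellMass μ π ᵥ* transitionMatrix μ π π' = cellMass μ π' := by
  classical
  ext j
  have h := lintegral_comp_comp_eq_sum_transitionMatrix μ hπ hπ' fun _ => Pi.single j 1
  rw [lintegral_comp_eq_sum_cellMass μ hπ' (Pi.single j 1)] at h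
  simp only [Pi.single_apply, mul_ite, mul_one, mul_zero, Finset.sum_ite_eq', Finset.mem_univ,
    if_true] at h
  rw [Matrix.vecMul, dotProduct]
  exact_mod_cast h.symm

end TransitionMatrix

lemma apply_le_one_of_mulVec_one {ι κ : Type*} [Fintype κ] {Q : Matrix ι κ ℝ≥0}
    (hQ : Q *ᵥ 1 = 1) (i : ι) (j : κ) : Q i j ≤ 1 := by
  calc Q i j ≤ ∑ j, Q i j := Finset.single_le_sum (fun _ _ => zero_le) (Finset.mem_univ j)
    _ = 1 := by simpa [Matrix.mulVec, dotProduct] using congrFun hQ i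

section Hoelder

variable {ι κ : Type*} [Fintype ι] [Fintype κ]

lemma sum_mul_rpow_le_rpow_sum_mul_rpow {w : κ → ℝ≥0} (hw : ∑ j, w j = 1) (z : κ → ℝ≥0∞) {p r : ℝ}
    (hp : 0 < p) (hpr : p ≤ r) : ∑ j, w j * z j ^ p ≤ (∑ j, w j * z j ^ r) ^ (p / r) := by
  have hr : 0 < r := hp.trans_le hpr
  have h := ENNReal.rpow_arith_mean_le_arith_mean_rpow Finset.univ (fun j => (w j : ℝ≥0∞))
    (fun j => z j ^ p) (by exact_mod_cast hw) ((one_le_div hp).2 hpr)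
  simp only [← ENNReal.rpow_mul, mul_div_cancel₀ r hp.ne'] at h
  have := ENNReal.rpow_le_rpow h (show 0 ≤ p / r by positivity)
  rwa [← ENNReal.rpow_mul, div_mul_div_cancel₀ hp.ne', div_self hr.ne', ENNReal.rpow_one] at this

lemma sum_rpow_le_card_rpow_mul (b : ι → ℝ≥0∞) {u : ℝ} (hu : 0 < u) (hu1 : u ≤ 1) :
    ∑ i, b i ^ u ≤ (Fintype.card ι : ℝ≥0∞) ^ (1 - u) * (∑ i, b i) ^ u := by
  have h := ENNReal.rpow_sum_le_const_mul_sum_rpow Finset.univ (fun i => b i ^ u)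
    ((one_le_inv₀ hu).2 hu1)
  simp only [← ENNReal.rpow_mul, mul_inv_cancel₀ hu.ne', ENNReal.rpow_one] at h
  have := ENNReal.rpow_le_rpow h hu.le
  rwa [← ENNReal.rpow_mul, inv_mul_cancel₀ hu.ne', ENNReal.rpow_one,
    ENNReal.mul_rpow_of_nonneg _ _ hu.le, ← ENNReal.rpow_mul, sub_mul, inv_mul_cancel₀ hu.ne',
    one_mul, Finset.card_univ] at this

end Hoelder

section ExpectedTransportCost

variable {Ω F ι κ : Type*} [MeasurableSpace Ω] [MeasurableSpace F] [Fintype ι] [MeasurableSpace ι]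
  [MeasurableSingletonClass ι] [Fintype κ] [MeasurableSpace κ] [MeasurableSingletonClass κ]
  [Nonempty κ] (μ : Measure F) [IsFiniteMeasure μ] {π : F → ι} {π' : F → κ} {p r : ℝ}
  {ρ : Measure Ω} {a : Ω → ι → ℝ≥0} {c : ℝ≥0∞}

lemma lintegral_sum_mul_sum_transitionMatrix_le (hπ : Measurable π) (hπ' : Measurable π')
    (d : ι → κ → ℝ≥0∞) (hp : 0 < p) (hpr : p ≤ r) (ha : Measurable a)
    (hac : ∀ i, ∫⁻ ω, a ω i ∂ρ ≤ c ^ (1 - p / r) * (cellMass μ π i : ℝ≥0∞) ^ (p / r)) :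
    ∫⁻ ω, ∑ i, a ω i * ∑ j, transitionMatrix μ π π' i j * d i j ^ p ∂ρ ≤
      (Fintype.card ι * c) ^ (1 - p / r) * (∫⁻ x, d (π x) (π' x) ^ r ∂μ) ^ (p / r) := by
  have hr : 0 < r := hp.trans_le hpr
  have hu1 : p / r ≤ 1 := (div_le_one hr).2 hpr
  set P := transitionMatrix μ π π'
  have hrow (i : ι) : ∑ j, P i j = 1 := by
    simpa [Matrix.mulVec, dotProduct] using congrFun (transitionMatrix_mulVec_one μ π π') i
  calc _ = ∑ i, (∫⁻ ω, a ω i ∂ρ) * ∑ j, P i j * d i j ^ p := by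
        rw [lintegral_finsetSum _ fun i _ => by fun_prop]
        exact Finset.sum_congr rfl fun i _ => lintegral_mul_const _ (by fun_prop)
    _ ≤ ∑ i, c ^ (1 - p / r) * (cellMass μ π i : ℝ≥0∞) ^ (p / r) *
          (∑ j, P i j * d i j ^ r) ^ (p / r) := by
        gcongr with i
        · exact hac i
        · exact sum_mul_rpow_le_rpow_sum_mul_rpow (hrow i) _ hp hpr
    _ = c ^ (1 - p / r) * ∑ i, (cellMass μ π i * ∑ j, P i j * d i j ^ r) ^ (p / r) := by
        rw [Finset.mul_sum]
        refine Finset.sum_congr rfl fun i _ => ?_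
        rw [ENNReal.mul_rpow_of_nonneg _ _ (by positivity), mul_assoc]
    _ ≤ c ^ (1 - p / r) * ((Fintype.card ι : ℝ≥0∞) ^ (1 - p / r) *
          (∑ i, cellMass μ π i * ∑ j, P i j * d i j ^ r) ^ (p / r)) := by
        gcongr
        exact sum_rpow_le_card_rpow_mul _ (by positivity) hu1
    _ = _ := by
        rw [lintegral_comp_comp_eq_sum_transitionMatrix μ hπ hπ' fun i j => d i j ^ r,
          ENNReal.mul_rpow_of_nonneg _ _ (by linarith)]
        ring

lemma eLpNorm'_transportCost_le {E : Type*} [MetricSpace E] (hπ : Measurable π)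
    (hπ' : Measurable π') (s : ι → E) (t : κ → E) (hp : 0 < p) (hpr : p ≤ r) (ha : Measurable a)
    (hac : ∀ i, ∫⁻ ω, a ω i ∂ρ ≤ c ^ (1 - p / r) * (cellMass μ π i : ℝ≥0∞) ^ (p / r)) :
    eLpNorm' (fun ω => transportCost p s t (transitionMatrix μ π π') (a ω)) p ρ ≤
      (Fintype.card ι * c) ^ (1 / p - 1 / r) *
        eLpNorm' (fun x => edist (s (π x)) (t (π' x))) r μ := by
  have hr : 0 < r := hp.trans_le hpr
  simp only [eLpNorm', enorm_eq_self, transportCost, ← ENNReal.rpow_mul, one_div_mul_cancel hp.ne',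
    ENNReal.rpow_one]
  refine (ENNReal.rpow_le_rpow (lintegral_sum_mul_sum_transitionMatrix_le μ hπ hπ'
    (fun i j => edist (s i) (t j)) hp hpr ha hac) (by positivity)).trans_eq ?_
  rw [ENNReal.mul_rpow_of_nonneg _ _ (by positivity), ← ENNReal.rpow_mul, ← ENNReal.rpow_mul]
  congr 2 <;> field_simp

end ExpectedTransportCost

section EmpiricalFlow

variable {F : Type*} [MeasurableSpace F] {n : ℕ}

lemma isProbabilityMeasure_empiricalMeasure (hn : n ≠ 0) (X : Fin n → F) :
    IsProbabilityMeasure (empiricalMeasure n X) := by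
  constructor
  have h := lintegral_empiricalMeasure (measurable_const (a := (1 : ℝ≥0∞))) X
  simpa [ENNReal.inv_mul_cancel, hn] using h

variable {ι κ : Type*} [Fintype ι] [MeasurableSpace ι] [MeasurableSingletonClass ι] {π : F → ι}

lemma vecMul_cellMass_empiricalMeasure (hn : n ≠ 0) (hπ : Measurable π) (Q : Matrix ι κ ℝ≥0)
    (X : Fin n → F) :
    cellMass (empiricalMeasure n X) π ᵥ* Q = fun j => 𝔼 l, Q (π (X l)) j := by
  have := isProbabilityMeasure_empiricalMeasure hn X
  ext j
  have hQ : Measurable fun x => Q (π x) j := (measurable_of_finite (Q · j)).comp hπ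
  refine congrArg NNReal.toReal (ENNReal.coe_injective ?_)
  rw [coe_vecMul_cellMass _ hπ, coe_expect_eq_lintegral_empiricalMeasure hn hQ]

variable {μ : Measure F} [IsProbabilityMeasure μ] {Q : Matrix ι κ ℝ≥0} {u : ℝ}

lemma measurable_vecMul_cellMass_empiricalMeasure (hn : n ≠ 0) (hπ : Measurable π)
    (Q : Matrix ι κ ℝ≥0) :
    Measurable fun X : Fin n → F => cellMass (empiricalMeasure n X) π ᵥ* Q := by
  simp only [vecMul_cellMass_empiricalMeasure hn hπ]
  exact measurable_pi_lambda _ fun j => measurable_expect ((measurable_of_finite (Q · j)).comp hπ)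

variable [Fintype κ]

lemma lintegral_vecMul_cellMass_empiricalMeasure_tsub_le (hn : n ≠ 0) (hπ : Measurable π)
    (hQ : Q *ᵥ 1 = 1) (j : κ) (hu : 1 / 2 ≤ u) (hu1 : u ≤ 1) :
    ∫⁻ X, ((cellMass (empiricalMeasure n X) π ᵥ* Q - cellMass μ π ᵥ* Q) j : ℝ≥0∞)
        ∂sampleMeasure μ n ≤
      (n : ℝ≥0∞)⁻¹ ^ (1 - u) * ((cellMass μ π ᵥ* Q) j : ℝ≥0∞) ^ u := by
  simp only [vecMul_cellMass_empiricalMeasure hn hπ, Pi.sub_apply]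
  exact lintegral_expect_tsub_le (h := fun x => Q (π x) j) hn
    ((measurable_of_finite (Q · j)).comp hπ)
    (fun _ => apply_le_one_of_mulVec_one hQ _ _) (coe_vecMul_cellMass μ hπ Q j).symm hu hu1

lemma lintegral_tsub_vecMul_cellMass_empiricalMeasure_le (hn : n ≠ 0) (hπ : Measurable π)
    (hQ : Q *ᵥ 1 = 1) (j : κ) (hu : 1 / 2 ≤ u) (hu1 : u ≤ 1) :
    ∫⁻ X, ((cellMass μ π ᵥ* Q - cellMass (empiricalMeasure n X) π ᵥ* Q) j : ℝ≥0∞)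
        ∂sampleMeasure μ n ≤
      (n : ℝ≥0∞)⁻¹ ^ (1 - u) * ((cellMass μ π ᵥ* Q) j : ℝ≥0∞) ^ u := by
  simp only [vecMul_cellMass_empiricalMeasure hn hπ, Pi.sub_apply]
  exact lintegral_tsub_expect_le (h := fun x => Q (π x) j) hn
    ((measurable_of_finite (Q · j)).comp hπ)
    (fun _ => apply_le_one_of_mulVec_one hQ _ _) (coe_vecMul_cellMass μ hπ Q j).symm hu hu1

end EmpiricalFlow

section Chain

variable {ι : ℕ → Type*} [∀ m, Fintype (ι m)] [DecidableEq (ι 0)]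

/-- The matrix `P 0 * ⋯ * P (m - 1)` of transition probabilities from level `0` to level `m`. -/
noncomputable def compositeMatrix (P : ∀ m, Matrix (ι m) (ι (m + 1)) ℝ≥0) :
    ∀ m, Matrix (ι 0) (ι m) ℝ≥0
  | 0 => 1
  | m + 1 => compositeMatrix P m * P m

lemma compositeMatrix_mulVec_one {P : ∀ m, Matrix (ι m) (ι (m + 1)) ℝ≥0}
    (hP : ∀ m, P m *ᵥ 1 = 1) (m : ℕ) : compositeMatrix P m *ᵥ 1 = 1 := by
  induction m with
  | zero => exact Matrix.one_mulVec 1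
  | succ m ih => rw [compositeMatrix, ← Matrix.mulVec_mulVec, hP, ih]

lemma vecMul_compositeMatrix_succ (P : ∀ m, Matrix (ι m) (ι (m + 1)) ℝ≥0) (a : ι 0 → ℝ≥0)
    (m : ℕ) : a ᵥ* compositeMatrix P (m + 1) = (a ᵥ* compositeMatrix P m) ᵥ* P m := by
  rw [compositeMatrix, Matrix.vecMul_vecMul]

variable {F : Type*} [MeasurableSpace F] [∀ m, MeasurableSpace (ι m)]
  [∀ m, MeasurableSingletonClass (ι m)] [∀ m, Nonempty (ι m)] {π : ∀ m, F → ι m}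

lemma cellMass_vecMul_compositeMatrix (μ : Measure F) [IsFiniteMeasure μ]
    (hπ : ∀ m, Measurable (π m)) (m : ℕ) :
    cellMass μ (π 0) ᵥ* compositeMatrix (fun m => transitionMatrix μ (π m) (π (m + 1))) m =
      cellMass μ (π m) := by
  induction m with
  | zero => exact Matrix.vecMul_one _
  | succ m ih =>
    rw [vecMul_compositeMatrix_succ, ih, cellMass_vecMul_transitionMatrix μ (hπ m) (hπ (m + 1))]

end Chain

lemma measurable_transportCost {E ι κ : Type*} [MetricSpace E] [Fintype ι] [Fintype κ] (p : ℝ)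
    (s : ι → E) (t : κ → E) (P : Matrix ι κ ℝ≥0) : Measurable (transportCost p s t P) := by
  unfold transportCost
  fun_prop

section Multiscale

variable {E : Type*} [MetricSpace E] {p r : ℝ} {n : ℕ}

lemma eLpNorm'_transportCost_add_transportCost_le {F ι₀ ι κ : Type*} [MeasurableSpace F]
    {μ : Measure F} [IsProbabilityMeasure μ] [Fintype ι₀] [MeasurableSpace ι₀]
    [MeasurableSingletonClass ι₀] [Fintype ι] [MeasurableSpace ι] [MeasurableSingletonClass ι]
    [Fintype κ] [MeasurableSpace κ] [MeasurableSingletonClass κ] [Nonempty κ] {π₀ : F → ι₀}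
    {π : F → ι} {π' : F → κ} (hn : n ≠ 0) (hp : 1 ≤ p) (hpr : p ≤ r) (hr : r ≤ 2 * p)
    (hπ₀ : Measurable π₀) (hπ : Measurable π) (hπ' : Measurable π') (s : ι → E) (t : κ → E)
    {Q : Matrix ι₀ ι ℝ≥0} (hQ : Q *ᵥ 1 = 1) (hQπ : cellMass μ π₀ ᵥ* Q = cellMass μ π) :
    eLpNorm' (fun X =>
        transportCost p s t (transitionMatrix μ π π')
          (cellMass (empiricalMeasure n X) π₀ ᵥ* Q - cellMass μ π₀ ᵥ* Q) +
        transportCost p s t (transitionMatrix μ π π')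
          (cellMass μ π₀ ᵥ* Q - cellMass (empiricalMeasure n X) π₀ ᵥ* Q)) p
        (sampleMeasure μ n) ≤
      2 * ((Fintype.card ι * (n : ℝ≥0∞)⁻¹) ^ (1 / p - 1 / r) *
        eLpNorm' (fun x => edist (s (π x)) (t (π' x))) r μ) := by
  have hp0 : 0 < p := by linarith
  have hr0 : 0 < r := by linarith
  have hu : 1 / 2 ≤ p / r := by rw [div_le_div_iff₀ two_pos hr0]; linarith
  have hu1 : p / r ≤ 1 := (div_le_one hr0).2 hpr
  have hflow := measurable_vecMul_cellMass_empiricalMeasure (n := n) hn hπ₀ Q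
  have hexcess := hflow.sub_const (cellMass μ π₀ ᵥ* Q)
  have hdeficit := hflow.const_sub (cellMass μ π₀ ᵥ* Q)
  have hcost := measurable_transportCost p s t (transitionMatrix μ π π')
  refine (eLpNorm'_add_le (hcost.comp hexcess).aestronglyMeasurable
    (hcost.comp hdeficit).aestronglyMeasurable hp).trans ?_
  rw [two_mul]
  refine add_le_add
    (eLpNorm'_transportCost_le μ hπ hπ' s t hp0 hpr hexcess fun j => ?_)
    (eLpNorm'_transportCost_le μ hπ hπ' s t hp0 hpr hdeficit fun j => ?_)
  · rw [← hQπ]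
    exact lintegral_vecMul_cellMass_empiricalMeasure_tsub_le hn hπ₀ hQ j hu hu1
  · rw [← hQπ]
    exact lintegral_tsub_vecMul_cellMass_empiricalMeasure_le hn hπ₀ hQ j hu hu1

variable [MeasurableSpace E] [SecondCountableTopology E] [OpensMeasurableSpace E]
  {ι : ℕ → Type*} [∀ m, Fintype (ι m)]

lemma Wp_map_comp_le_sum_transportCost {F : Type*} [MeasurableSpace F] [DecidableEq (ι 0)]
    [MeasurableSpace (ι 0)] [MeasurableSingletonClass (ι 0)] (hp : 1 ≤ p) (α β : Measure F)
    [IsProbabilityMeasure α] [IsProbabilityMeasure β] {π₀ : F → ι 0} (hπ₀ : Measurable π₀)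
    (s : ∀ m, ι m → E) {P : ∀ m, Matrix (ι m) (ι (m + 1)) ℝ≥0} (hP : ∀ m, P m *ᵥ 1 = 1)
    (K : ℕ) [Subsingleton (ι K)] :
    Wp p (α.map (s 0 ∘ π₀)) (β.map (s 0 ∘ π₀)) ≤
      ∑ m ∈ Finset.range K,
        (transportCost p (s m) (s (m + 1)) (P m)
          (cellMass α π₀ ᵥ* compositeMatrix P m - cellMass β π₀ ᵥ* compositeMatrix P m) +
        transportCost p (s m) (s (m + 1)) (P m)
          (cellMass β π₀ ᵥ* compositeMatrix P m - cellMass α π₀ ᵥ* compositeMatrix P m)) := by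
  have hstart (a : ι 0 → ℝ≥0) : a ᵥ* compositeMatrix P 0 = a := Matrix.vecMul_one a
  have hend : cellMass α π₀ ᵥ* compositeMatrix P K = cellMass β π₀ ᵥ* compositeMatrix P K := by
    have hQ := compositeMatrix_mulVec_one hP K
    ext j
    rw [← Fintype.sum_subsingleton (cellMass α π₀ ᵥ* compositeMatrix P K) j,
      ← Fintype.sum_subsingleton (cellMass β π₀ ᵥ* compositeMatrix P K) j,
      sum_vecMul_cellMass α hπ₀ hQ, sum_vecMul_cellMass β hπ₀ hQ]
  have hchain := Wp_le_sum_transportCost hp s hP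
    (A := (cellMass α π₀ ᵥ* compositeMatrix P ·)) (B := (cellMass β π₀ ᵥ* compositeMatrix P ·))
    (vecMul_compositeMatrix_succ P (cellMass α π₀))
    (vecMul_compositeMatrix_succ P (cellMass β π₀)) hend
  rwa [hstart, hstart, ← map_comp_eq_discreteMeasure α hπ₀,
    ← map_comp_eq_discreteMeasure β hπ₀] at hchain

variable {μ : Measure E} [IsProbabilityMeasure μ] [∀ m, MeasurableSpace (ι m)]
  [∀ m, MeasurableSingletonClass (ι m)] {π : ∀ m, E → ι m}

lemma eLpNorm'_Wp_map_comp_empiricalMeasure_le (hn : n ≠ 0) (hp : 1 ≤ p) (hpr : p ≤ r)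
    (hr : r ≤ 2 * p) (hπ : ∀ m, Measurable (π m)) (s : ∀ m, ι m → E) (K : ℕ)
    [Subsingleton (ι K)] :
    eLpNorm' (fun X => Wp p ((empiricalMeasure n X).map (s 0 ∘ π 0)) (μ.map (s 0 ∘ π 0))) p
        (sampleMeasure μ n) ≤
      ∑ m ∈ Finset.range K, 2 * ((Fintype.card (ι m) * (n : ℝ≥0∞)⁻¹) ^ (1 / p - 1 / r) *
        eLpNorm' (fun x => edist (s m (π m x)) (s (m + 1) (π (m + 1) x))) r μ) := by
  classical
  have (m : ℕ) : Nonempty (ι m) := (nonempty_of_isProbabilityMeasure μ).map (π m)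
  let P (m : ℕ) := transitionMatrix μ (π m) (π (m + 1))
  have hP (m : ℕ) : P m *ᵥ 1 = 1 := transitionMatrix_mulVec_one μ _ _
  let Q := compositeMatrix P
  let A (m : ℕ) (X : Fin n → E) := cellMass (empiricalMeasure n X) (π 0) ᵥ* Q m
  let B (m : ℕ) := cellMass μ (π 0) ᵥ* Q m
  let cost (m : ℕ) (X : Fin n → E) : ℝ≥0∞ :=
    transportCost p (s m) (s (m + 1)) (P m) (A m X - B m) +
      transportCost p (s m) (s (m + 1)) (P m) (B m - A m X)
  have hcost (m : ℕ) : Measurable (cost m) := by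
    have hA := measurable_vecMul_cellMass_empiricalMeasure (n := n) hn (hπ 0) (Q m)
    have htransport := measurable_transportCost p (s m) (s (m + 1)) (P m)
    exact (htransport.comp (hA.sub_const _)).add (htransport.comp (hA.const_sub _))
  calc _ ≤ eLpNorm' (∑ m ∈ Finset.range K, cost m) p (sampleMeasure μ n) := by
        refine eLpNorm'_mono_enorm_ae (by linarith) (ae_of_all _ fun X => ?_)
        have := isProbabilityMeasure_empiricalMeasure hn X
        simpa only [enorm_eq_self, Finset.sum_apply] using
          Wp_map_comp_le_sum_transportCost hp (empiricalMeasure n X) μ (hπ 0) s hP K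
    _ ≤ ∑ m ∈ Finset.range K, eLpNorm' (cost m) p (sampleMeasure μ n) :=
        eLpNorm'_sum_le (fun m _ => (hcost m).aestronglyMeasurable) hp
    _ ≤ _ := Finset.sum_le_sum fun m _ =>
        eLpNorm'_transportCost_add_transportCost_le hn hp hpr hr (hπ 0) (hπ m) (hπ (m + 1)) _ _
          (compositeMatrix_mulVec_one hP m) (cellMass_vecMul_compositeMatrix μ hπ m)

end Multiscale

/- The lower integral of a function is attained by a measurable minorant `h`, and then
`h ≤ f + (h - f)` with `h - f ≤ g` measurable. -/
lemma eLpNorm'_add_le_of_measurable_left {F : Type*} [MeasurableSpace F] {ρ : Measure F}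
    {f : F → ℝ≥0∞} (hf : Measurable f) (g : F → ℝ≥0∞) {p : ℝ} (hp : 1 ≤ p) :
    eLpNorm' (f + g) p ρ ≤ eLpNorm' f p ρ + eLpNorm' g p ρ := by
  have hp0 : 0 < p := by linarith
  obtain ⟨k, hk, hkle, hkint⟩ := exists_measurable_le_lintegral_eq ρ fun x => (f + g) x ^ p
  let h : F → ℝ≥0∞ := fun x => k x ^ (1 / p)
  have hh : Measurable h := hk.pow_const _
  have hle (x : F) : h x ≤ f x + g x := by
    refine (ENNReal.rpow_le_rpow (hkle x) (by positivity)).trans_eq ?_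
    rw [← ENNReal.rpow_mul, mul_one_div_cancel hp0.ne', ENNReal.rpow_one, Pi.add_apply]
  calc eLpNorm' (f + g) p ρ = eLpNorm' h p ρ := by
        simp only [eLpNorm', enorm_eq_self, hkint, h, ← ENNReal.rpow_mul,
          one_div_mul_cancel hp0.ne', ENNReal.rpow_one]
    _ ≤ eLpNorm' (f + (h - f)) p ρ :=
        eLpNorm'_mono_enorm_ae hp0.le (ae_of_all _ fun x => le_add_tsub)
    _ ≤ eLpNorm' f p ρ + eLpNorm' (h - f) p ρ :=
        eLpNorm'_add_le hf.aestronglyMeasurable (hh.sub hf).aestronglyMeasurable hp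
    _ ≤ eLpNorm' f p ρ + eLpNorm' g p ρ := by
        gcongr
        exact eLpNorm'_mono_enorm_ae hp0.le (ae_of_all _ fun x => tsub_le_iff_left.2 (hle x))

lemma eLpNorm'_eLpNorm'_empiricalMeasure {F : Type*} [MeasurableSpace F] {μ : Measure F}
    [IsProbabilityMeasure μ] {n : ℕ} (hn : n ≠ 0) {p : ℝ} (hp : 0 < p) {f : F → ℝ≥0∞}
    (hf : Measurable f) :
    eLpNorm' (fun X => eLpNorm' f p (empiricalMeasure n X)) p (sampleMeasure μ n) =
      eLpNorm' f p μ := by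
  simp only [eLpNorm', enorm_eq_self, ← ENNReal.rpow_mul, one_div_mul_cancel hp.ne',
    ENNReal.rpow_one]
  rw [lintegral_sampleMeasure_lintegral_empiricalMeasure hn (hf.pow_const p)]

lemma measurable_eLpNorm'_empiricalMeasure {F : Type*} [MeasurableSpace F] {n : ℕ} {f : F → ℝ≥0∞}
    (hf : Measurable f) (p : ℝ) :
    Measurable fun X : Fin n → F => eLpNorm' f p (empiricalMeasure n X) := by
  simp only [eLpNorm', enorm_eq_self, lintegral_empiricalMeasure (hf.pow_const p)]
  fun_prop

section ExpectedDistance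

variable {E : Type*} [MetricSpace E] [MeasurableSpace E] [SecondCountableTopology E]
  [OpensMeasurableSpace E] {p r : ℝ}

lemma eLpNorm'_edist_triangle_left {F : Type*} [MeasurableSpace F] {ρ : Measure F} (hr : 1 ≤ r)
    {f g h : F → E} (hf : Measurable f) (hg : Measurable g) (hh : Measurable h) :
    eLpNorm' (fun x => edist (f x) (g x)) r ρ ≤
      eLpNorm' (fun x => edist (h x) (f x)) r ρ + eLpNorm' (fun x => edist (h x) (g x)) r ρ :=
  (eLpNorm'_mono_enorm_ae (by linarith) (ae_of_all _ fun x => edist_triangle_left _ _ (h x))).trans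
    (eLpNorm'_add_le (hh.edist hf).aestronglyMeasurable (hh.edist hg).aestronglyMeasurable hr)

lemma Wp_le_eLpNorm'_add_Wp_map {ι : Type*} [Finite ι] [MeasurableSpace ι]
    [MeasurableSingletonClass ι] (hp : 1 ≤ p) (α β : Measure E) [IsFiniteMeasure α]
    [IsFiniteMeasure β] {π : E → ι} (hπ : Measurable π) (s : ι → E) :
    Wp p α β ≤ eLpNorm' (fun x => edist x (s (π x))) p α +
      (eLpNorm' (fun x => edist x (s (π x))) p β + Wp p (α.map (s ∘ π)) (β.map (s ∘ π))) := by
  have := Fintype.ofFinite ι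
  have hT : Measurable (s ∘ π) := (measurable_of_finite s).comp hπ
  have hα := Wp_triangle_discreteMeasure hp s (cellMass α π) α β
  have hβ := Wp_triangle_discreteMeasure hp s (cellMass β π) (α.map (s ∘ π)) β
  rw [← map_comp_eq_discreteMeasure α hπ] at hα
  rw [← map_comp_eq_discreteMeasure β hπ, Wp_comm p (β.map (s ∘ π))] at hβ
  rw [add_comm (eLpNorm' _ p β)]
  exact hα.trans (add_le_add (Wp_map_right_le hT α)
    (hβ.trans (add_le_add_right (Wp_map_right_le hT β) _)))

variable {μ : Measure E} [IsProbabilityMeasure μ] {ι : ℕ → Type*} [∀ m, Fintype (ι m)]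
  [∀ m, MeasurableSpace (ι m)] [∀ m, MeasurableSingletonClass (ι m)] {π : ∀ m, E → ι m} {n : ℕ}

lemma expWpPow_le_two_mul_add_sum (hn : n ≠ 0) (hp : 1 ≤ p) (hpr : p ≤ r)
    (hr : r ≤ 2 * p) (hπ : ∀ m, Measurable (π m)) (s : ∀ m, ι m → E) {K : ℕ}
    [Subsingleton (ι K)] {ε : ℕ → ℝ≥0∞}
    (hε : ∀ m, eLpNorm' (fun x => edist x (s m (π m x))) r μ ≤ ε m) :
    expWpPow p μ n ≤ 2 * ε 0 + ∑ m ∈ Finset.range K,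
      2 * ((Fintype.card (ι m) * (n : ℝ≥0∞)⁻¹) ^ (1 / p - 1 / r) * (ε m + ε (m + 1))) := by
  have hp0 : 0 < p := by linarith
  have hsπ (m : ℕ) : Measurable (s m ∘ π m) := (measurable_of_finite (s m)).comp (hπ m)
  let d (x : E) : ℝ≥0∞ := edist x (s 0 (π 0 x))
  have hd : Measurable d := measurable_id.edist (hsπ 0)
  have hd0 : eLpNorm' d p μ ≤ ε 0 :=
    (eLpNorm'_le_eLpNorm'_of_exponent_le hp0 hpr μ hd.aestronglyMeasurable).trans (hε 0)
  let W (X : Fin n → E) : ℝ≥0∞ :=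
    Wp p ((empiricalMeasure n X).map (s 0 ∘ π 0)) (μ.map (s 0 ∘ π 0))
  calc expWpPow p μ n
      ≤ eLpNorm' ((fun X => eLpNorm' d p (empiricalMeasure n X)) +
          ((fun _ => eLpNorm' d p μ) + W)) p (sampleMeasure μ n) := by
        refine eLpNorm'_mono_enorm_ae (f := fun X => Wp p (empiricalMeasure n X) μ) hp0.le
          (ae_of_all _ fun X => ?_)
        have := isProbabilityMeasure_empiricalMeasure hn X
        exact Wp_le_eLpNorm'_add_Wp_map hp _ μ (hπ 0) (s 0)
    _ ≤ eLpNorm' (fun X => eLpNorm' d p (empiricalMeasure n X)) p (sampleMeasure μ n) +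
          (eLpNorm' (fun _ => eLpNorm' d p μ) p (sampleMeasure μ n) +
            eLpNorm' W p (sampleMeasure μ n)) :=
        (eLpNorm'_add_le_of_measurable_left (measurable_eLpNorm'_empiricalMeasure hd p) _
          hp).trans (by gcongr; exact eLpNorm'_add_le_of_measurable_left measurable_const _ hp)
    _ ≤ _ := by
        rw [eLpNorm'_eLpNorm'_empiricalMeasure hn hp0 hd,
          eLpNorm'_const_of_isProbabilityMeasure _ hp0, enorm_eq_self, two_mul, add_assoc]
        refine add_le_add hd0 (add_le_add hd0 ?_)
        refine (eLpNorm'_Wp_map_comp_empiricalMeasure_le hn hp hpr hr hπ s K).trans ?_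
        gcongr with m
        exact (eLpNorm'_edist_triangle_left (hp.trans hpr) (hsπ m) (hsπ (m + 1))
          measurable_id).trans (add_le_add (hε m) (hε (m + 1)))

lemma expWpPow_le_two_mul_add_sum_of_dyadic (hn : n ≠ 0) (hp : 1 ≤ p) (hpr : p ≤ r)
    (hr : r ≤ 2 * p) {π : ∀ k, E → Fin (2 ^ k)} (hπ : ∀ k, Measurable (π k))
    (s : ∀ k, Fin (2 ^ k) → E) {ε : ℕ → ℝ≥0∞}
    (hε : ∀ k, eLpNorm' (fun x => edist x (s k (π k x))) r μ ≤ ε k) (K : ℕ) :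
    expWpPow p μ n ≤ 2 * ε K + ∑ k ∈ Finset.range K,
      2 * ((2 ^ (k + 1) / n) ^ (1 / p - 1 / r) * (ε (k + 1) + ε k)) := by
  have : Subsingleton (Fin (2 ^ (K - K))) := by
    rw [Nat.sub_self, pow_zero]
    infer_instance
  refine (expWpPow_le_two_mul_add_sum hn hp hpr hr (fun m => hπ (K - m)) (fun m => s (K - m))
    (K := K) fun m => hε (K - m)).trans_eq (congrArg _ ?_)
  rw [← Finset.sum_range_reflect]
  refine Finset.sum_congr rfl fun m hm => ?_
  have hmK : m < K := Finset.mem_range.1 hm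
  rw [show K - 1 - m + 1 = K - m by lia, show K - (K - 1 - m) = m + 1 by lia,
    show K - (K - m) = m by lia, Fintype.card_fin, Nat.cast_pow, Nat.cast_ofNat, ← div_eq_mul_inv]

end ExpectedDistance

section Quantization

variable {E : Type*} [MetricSpace E] [MeasurableSpace E]

lemma exists_measurable_forall_edist_le [OpensMeasurableSpace E] [Nonempty E] (S : Finset E)
    {N : ℕ} (hN : N ≠ 0) (hS : S.card ≤ N) :
    ∃ (s : Fin N → E) (π : E → Fin N), Measurable π ∧
      ∀ x, ∀ y ∈ S, edist x (s (π x)) ≤ edist x y := by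
  inhabit E
  let s (k : ℕ) : E := S.toList.getD k default
  let ind := SimpleFunc.nearestPtInd s (N - 1)
  have hind (x : E) : ind x < N := by
    have := SimpleFunc.nearestPtInd_le s (N - 1) x
    lia
  have : NeZero N := ⟨hN⟩
  refine ⟨fun k => s k, fun x => Fin.ofNat N (ind x),
    (measurable_of_countable (Fin.ofNat N)).comp ind.measurable, fun x y hy => ?_⟩
  obtain ⟨k, hk, rfl⟩ := List.mem_iff_getElem.1 (Finset.mem_toList.2 hy)
  have hkN : k ≤ N - 1 := by
    rw [Finset.length_toList] at hk
    lia
  have hnearest := SimpleFunc.edist_nearestPt_le s x hkN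
  simp only [s, List.getD_eq_getElem _ _ hk] at hnearest
  change edist x (s (Fin.ofNat N (ind x)).val) ≤ _
  rwa [Fin.val_ofNat, Nat.mod_eq_of_lt (hind x), edist_comm x, edist_comm x]

variable [SecondCountableTopology E] [OpensMeasurableSpace E] {q : ℝ}

lemma eLpNorm'_edist_le_Wp (hq : 0 ≤ q) {μ ν : Measure E} {S : Set E} (hν : ν Sᶜ = 0) {T : E → E}
    (hT : Measurable T) (hTS : ∀ x, ∀ y ∈ S, edist x (T x) ≤ edist x y) :
    eLpNorm' (fun x => edist x (T x)) q μ ≤ Wp q μ ν := by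
  refine le_Wp fun γ hμ hγν => ?_
  have hd : Measurable fun x => edist x (T x) := measurable_id.edist hT
  rw [← hμ, eLpNorm'_map_measure hd measurable_fst]
  refine eLpNorm'_mono_enorm_ae hq ?_
  have hγS : ∀ᵐ z ∂γ, z.2 ∈ S :=
    ae_of_ae_map measurable_snd.aemeasurable (by rwa [hγν, ae_iff])
  filter_upwards [hγS] with z hz
  exact hTS z.1 z.2 hz

lemma exists_eLpNorm'_edist_le_quantErr_add (hq : 0 ≤ q) (μ : Measure E) [IsProbabilityMeasure μ]
    {N : ℕ} (hN : N ≠ 0) {δ : ℝ≥0∞} (hδ : δ ≠ 0) :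
    ∃ (s : Fin N → E) (π : E → Fin N), Measurable π ∧
      eLpNorm' (fun x => edist x (s (π x))) q μ ≤ quantErr q N μ + δ := by
  have := nonempty_of_isProbabilityMeasure μ
  by_cases htop : quantErr q N μ = ∞
  · obtain ⟨s, π, hπ, -⟩ := exists_measurable_forall_edist_le (E := E) ∅ hN (by simp)
    exact ⟨s, π, hπ, by simp [htop]⟩
  have hlt : quantErr q N μ < quantErr q N μ + δ := ENNReal.lt_add_right htop hδ
  conv_lhs at hlt => unfold quantErr
  simp only [iInf_lt_iff] at hlt
  obtain ⟨ν, ⟨-, S, hSN, hνS⟩, hW⟩ := hlt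
  obtain ⟨s, π, hπ, hnearest⟩ := exists_measurable_forall_edist_le S hN hSN
  exact ⟨s, π, hπ, (eLpNorm'_edist_le_Wp hq hνS ((measurable_of_finite s).comp hπ)
    hnearest).trans hW.le⟩

end Quantization

lemma two_mul_add_sum_le_ten_mul_sum {c ε : ℕ → ℝ≥0∞} {K : ℕ} (hc : ∀ k, c (k + 1) ≤ 2 * c k)
    (hK : 1 ≤ 2 * c K) :
    2 * ε K + ∑ k ∈ Finset.range K, 2 * (c (k + 1) * (ε (k + 1) + ε k)) ≤
      10 * ∑ k ∈ Finset.range (K + 1), c k * ε k := by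
  set S := ∑ k ∈ Finset.range (K + 1), c k * ε k with hS
  have hlast : ε K ≤ 2 * S := by
    calc ε K ≤ (2 * c K) * ε K := le_mul_of_one_le_left' hK
      _ = 2 * (c K * ε K) := mul_assoc _ _ _
      _ ≤ 2 * S := by
        gcongr
        exact Finset.single_le_sum (f := fun k => c k * ε k) (fun _ _ => zero_le)
          (Finset.self_mem_range_succ K)
  have hfine : ∑ k ∈ Finset.range K, c (k + 1) * ε (k + 1) ≤ S := by
    rw [hS, Finset.sum_range_succ']
    exact le_self_add
  have hcoarse : ∑ k ∈ Finset.range K, c (k + 1) * ε k ≤ 2 * S := by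
    rw [hS, Finset.sum_range_succ, mul_add, Finset.mul_sum]
    refine le_add_right (Finset.sum_le_sum fun k _ => ?_)
    rw [← mul_assoc]
    gcongr
    exact hc k
  calc _ = 2 * ε K + 2 * (∑ k ∈ Finset.range K, c (k + 1) * ε (k + 1) +
          ∑ k ∈ Finset.range K, c (k + 1) * ε k) := by
        rw [← Finset.mul_sum, ← Finset.sum_add_distrib]
        simp only [mul_add]
    _ ≤ 2 * (2 * S) + 2 * (S + 2 * S) := by gcongr
    _ = 10 * S := by ring

lemma le_mul_sum_of_forall_le_mul_sum_add {ι : Type*} {t : Finset ι} {a C : ℝ≥0∞}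
    {c ε : ι → ℝ≥0∞} (hC : C ≠ ∞) (hc : ∀ k, c k ≠ ∞)
    (h : ∀ δ ≠ 0, a ≤ C * ∑ k ∈ t, c k * (ε k + δ)) : a ≤ C * ∑ k ∈ t, c k * ε k := by
  have hcont : Continuous fun δ => C * ∑ k ∈ t, c k * (ε k + δ) :=
    (ENNReal.continuous_const_mul hC).comp (continuous_finsetSum _ fun k _ =>
      (ENNReal.continuous_const_mul (hc k)).comp (by fun_prop))
  have hlim := (hcont.tendsto 0).mono_left (nhdsWithin_le_nhds (s := {0}ᶜ))
  simp only [add_zero] at hlim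
  exact ge_of_tendsto hlim (eventually_mem_nhdsWithin.mono h)

lemma div_rpow_succ_le_two_mul (n k : ℕ) {θ : ℝ} (hθ : 0 ≤ θ) (hθ1 : θ ≤ 1) :
    ((2 : ℝ≥0∞) ^ (k + 1) / n) ^ θ ≤ 2 * ((2 : ℝ≥0∞) ^ k / n) ^ θ := by
  rw [pow_succ', mul_div_assoc, ENNReal.mul_rpow_of_nonneg _ _ hθ]
  gcongr
  simpa using ENNReal.rpow_le_rpow_of_exponent_le (x := 2) one_le_two hθ1

lemma one_le_two_pow_log_succ_div (n : ℕ) (hn : n ≠ 0) :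
    1 ≤ (2 : ℝ≥0∞) ^ (Nat.log 2 n + 1) / n := by
  rw [ENNReal.le_div_iff_mul_le (by simp [hn]) (by simp), one_mul]
  exact_mod_cast (Nat.lt_pow_succ_log_self one_lt_two n).le

lemma one_le_two_div_abs_inv_sub_inv {a b : ℝ} (ha : 1 ≤ a) (hb : 1 ≤ b) (hab : a ≠ b) :
    1 ≤ 2 / |1 / a - 1 / b| := by
  have hpos : 0 < |1 / a - 1 / b| := by
    rw [abs_pos, sub_ne_zero, one_div, one_div]
    exact inv_injective.ne hab
  have ha1 : 1 / a ≤ 1 := (div_le_one (by positivity)).2 ha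
  have hb1 : 1 / b ≤ 1 := (div_le_one (by positivity)).2 hb
  have ha0 : 0 < 1 / a := by positivity
  have hb0 : 0 < 1 / b := by positivity
  rw [one_le_div hpos, abs_le]
  constructor <;> linarith

lemma two_pow_div_rpow_eq_ofReal {n : ℕ} (hn : n ≠ 0) (k : ℕ) (θ : ℝ) :
    ((2 : ℝ≥0∞) ^ k / n) ^ θ = ENNReal.ofReal (((2 : ℝ) ^ k / n) ^ θ) := by
  have hn0 : (0 : ℝ) < n := by positivity
  rw [← ENNReal.ofReal_rpow_of_pos (by positivity), ENNReal.ofReal_div_of_pos hn0,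
    ENNReal.ofReal_pow zero_le_two, ENNReal.ofReal_ofNat, ENNReal.ofReal_natCast]

lemma two_pow_div_rpow_le_coeff {p q : ℝ} (hp : 1 ≤ p) (hq : p ≤ q) {n : ℕ} (hn : n ≠ 0)
    (k : ℕ) :
    ((2 : ℝ≥0∞) ^ k / n) ^ (1 / p - 1 / min q (2 * p)) ≤
      if 2 * p < q then
        ENNReal.ofReal ((2 / |1 / (2 * p) - 1 / q|) * (((2 : ℝ) ^ k / n) ^ (1 / (2 * p))))
      else if q = 2 * p then
        ((Nat.log 2 n + 1 : ℕ) : ℝ≥0∞) * ENNReal.ofReal (((2 : ℝ) ^ k / n) ^ (1 / (2 * p)))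
      else
        ENNReal.ofReal ((2 / |1 / (2 * p) - 1 / q|) * (((2 : ℝ) ^ k / n) ^ (1 / p - 1 / q))) := by
  have hhalf : 1 / p - 1 / (2 * p) = 1 / (2 * p) := by
    field_simp
    norm_num
  have hconst (hne : 2 * p ≠ q) : 1 ≤ 2 / |1 / (2 * p) - 1 / q| :=
    one_le_two_div_abs_inv_sub_inv (by linarith) (hp.trans hq) hne
  rw [two_pow_div_rpow_eq_ofReal hn]
  split_ifs with hlt heq
  · rw [min_eq_right hlt.le, hhalf]
    exact ENNReal.ofReal_le_ofReal (le_mul_of_one_le_left (by positivity) (hconst hlt.ne))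
  · rw [min_eq_right heq.ge, hhalf]
    exact le_mul_of_one_le_left' (by exact_mod_cast Nat.succ_pos _)
  · rw [min_eq_left (not_lt.1 hlt)]
    exact ENNReal.ofReal_le_ofReal (le_mul_of_one_le_left (by positivity) (hconst (Ne.symm heq)))

theorem stmt_6_general {E : Type*} [MetricSpace E] [TopologicalSpace.SeparableSpace E]
    [MeasurableSpace E] [OpensMeasurableSpace E] (p : ℝ) (hp : 1 ≤ p) (μ : Measure E)
    [IsProbabilityMeasure μ] (n : ℕ) (hn : 1 ≤ n) (q : ℝ) (hq : p ≤ q) :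
    expWpPow p μ n ≤ 10 * ∑ k ∈ Finset.range (Nat.log 2 n + 1),
      ((2 : ℝ≥0∞) ^ k / n) ^ (1 / p - 1 / min q (2 * p)) * quantErr q (2 ^ k) μ := by
  have := UniformSpace.secondCountable_of_separable E
  have hn0 : n ≠ 0 := Nat.one_le_iff_ne_zero.1 hn
  have hp0 : 0 < p := by linarith
  set r := min q (2 * p)
  have hpr : p ≤ r := le_min hq (by linarith)
  have hr0 : 0 < r := hp0.trans_le hpr
  have hθ : 0 ≤ 1 / p - 1 / r := sub_nonneg.2 (one_div_le_one_div_of_le hp0 hpr)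
  have hθ1 : 1 / p - 1 / r ≤ 1 :=
    (sub_le_self _ (by positivity)).trans ((div_le_one hp0).2 hp)
  have hdouble (k : ℕ) := div_rpow_succ_le_two_mul n k hθ hθ1
  refine le_mul_sum_of_forall_le_mul_sum_add (by simp) (fun k => by finiteness) fun δ hδ => ?_
  choose s π hπ hs using fun k : ℕ =>
    exists_eLpNorm'_edist_le_quantErr_add (hp0.le.trans hq) μ (pow_ne_zero k two_ne_zero) hδ
  refine (expWpPow_le_two_mul_add_sum_of_dyadic hn0 hp hpr (min_le_right _ _) hπ s (fun k =>
    (eLpNorm'_le_eLpNorm'_of_exponent_le hr0 (min_le_left _ _) μ ?_).trans (hs k))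
    (Nat.log 2 n)).trans (two_mul_add_sum_le_ten_mul_sum hdouble ?_)
  · exact (measurable_id.edist ((measurable_of_finite _).comp (hπ k))).aestronglyMeasurable
  · refine le_trans ?_ (hdouble _)
    simpa using ENNReal.rpow_le_rpow (one_le_two_pow_log_succ_div n hn0) hθ

/-- **Corollary (main4).** Let `(E, d_E)` be a separable metric space, `p ≥ 1`,
`μ ∈ 𝒫_p(E)`, `n ∈ ℕ` and `q ≥ p`. Then
`(𝔼[W_p(μ_n,μ)^p])^{1/p} ≤ 10 ∑_{k=0}^{⌊log₂ n⌋} a_k e_{2^k,q}(μ)`, where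
`a_k = C(p,q)(2^k/n)^{1/(2p)}` if `q > 2p`,
`a_k = (⌊log₂ n⌋+1)(2^k/n)^{1/(2p)}` if `q = 2p`,
`a_k = C(p,q)(2^k/n)^{1/p − 1/q}` if `q < 2p`, with `C(p,q) = 2/|1/(2p) − 1/q|`. -/
theorem stmt_6 {E : Type*} [MetricSpace E] [TopologicalSpace.SeparableSpace E]
    [MeasurableSpace E] [BorelSpace E]
    (p : ℝ) (hp : 1 ≤ p)
    (μ : Measure E) [IsProbabilityMeasure μ] (hμ : HasFiniteMoment p μ)
    (n : ℕ) (hn : 1 ≤ n) (q : ℝ) (hq : p ≤ q) :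
    expWpPow p μ n ≤
      10 * ∑ k ∈ Finset.range (Nat.log 2 n + 1),
        (if 2 * p < q then
            ENNReal.ofReal
              ((2 / |1 / (2 * p) - 1 / q|) * (((2 : ℝ) ^ k / n) ^ (1 / (2 * p))))
          else if q = 2 * p then
            ((Nat.log 2 n + 1 : ℕ) : ℝ≥0∞) *
              ENNReal.ofReal (((2 : ℝ) ^ k / n) ^ (1 / (2 * p)))
          else
            ENNReal.ofReal
              ((2 / |1 / (2 * p) - 1 / q|) * (((2 : ℝ) ^ k / n) ^ (1 / p - 1 / q)))) *
          quantErr q (2 ^ k) μ :=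
  (stmt_6_general p hp μ n hn q hq).trans <| by
    gcongr with k
    exact two_pow_div_rpow_le_coeff hp hq (Nat.one_le_iff_ne_zero.1 hn) k
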